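/- arXiv:2509.01638 — 4 statements merged into one kernel-verified Lean document; each statement's English description precedes it below -/
import Mathlib

section
/- Let R be a commutative ring, S a multiplicative subset of R, M₁ and M₂ R-modules, and Kᵢ a submodule of Mᵢ for i = 1, 2. Then K₁ ⊕ K₂ is a u-S-essential submodule of the direct sum M₁ ⊕ M₂ if and only if K₁ is u-S-essential in M₁ and K₂ is u-S-essential in M₂. -/
/-- `K` is a uniformly `S`-essential submodule of `M`: whenever a submodule `L`
satisfies `s₁ • (K ⊓ L) = 0` for some `s₁ ∈ S`, then `s₂ • L = 0` for some `s₂ ∈ S`. -/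
def USEssential {R : Type*} [CommRing R] (S : Submonoid R) {M : Type*}
    [AddCommGroup M] [Module R M] (K : Submodule R M) : Prop :=
  ∀ L : Submodule R M,
    (∃ s ∈ S, ∀ x ∈ K ⊓ L, s • x = 0) → ∃ s ∈ S, ∀ x ∈ L, s • x = 0

/-!
For a linear map `f`, a submodule `L` is `u-S`-torsion as soon as `f(L)` and `L ⊓ ker f` are.
Now let `f⁻¹(K) ⊓ L` be `u-S`-torsion. So is its image `K ⊓ f(L)`, hence `f(L)` if `K` is
`u-S`-essential; and so is `L ⊓ ker f`, because `ker f ≤ f⁻¹(K)`. Thus `L` is `u-S`-torsion, and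
`u-S`-essentiality passes to preimages. The theorem follows: `K₁ ⊕ K₂` is the intersection of the
preimages of `K₁` and `K₂` under the projections, and each `Kᵢ` is the preimage of `K₁ ⊕ K₂` under
the inclusion of `Mᵢ`.
-/

section Torsion

variable {R M N : Type*} [Semiring R] {S : Submonoid R} [AddCommMonoid M] [Module R M]
  [AddCommMonoid N] [Module R N]

/-- `L` is a `u-S`-torsion module, stated for submodules of a fixed module so that `USEssential S K`
unfolds to `∀ L, IsUSTorsion S (K ⊓ L) → IsUSTorsion S L`. -/
def IsUSTorsion (S : Submonoid R) (L : Submodule R M) : Prop :=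
  ∃ s ∈ S, ∀ x ∈ L, s • x = 0

namespace IsUSTorsion

theorem mono {L L' : Submodule R M} (hL : IsUSTorsion S L) (h : L' ≤ L) : IsUSTorsion S L' := by
  obtain ⟨s, hs, hsL⟩ := hL
  exact ⟨s, hs, fun x hx => hsL x (h hx)⟩

theorem map {L : Submodule R M} (hL : IsUSTorsion S L) (f : M →ₗ[R] N) :
    IsUSTorsion S (L.map f) := by
  obtain ⟨s, hs, hsL⟩ := hL
  refine ⟨s, hs, ?_⟩
  rintro _ ⟨x, hx, rfl⟩
  rw [← map_smul, hsL x hx, map_zero]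

theorem of_map_of_inf_ker {L : Submodule R M} {f : M →ₗ[R] N} (hmap : IsUSTorsion S (L.map f))
    (hker : IsUSTorsion S (L ⊓ LinearMap.ker f)) : IsUSTorsion S L := by
  obtain ⟨t, ht, htL⟩ := hmap
  obtain ⟨s, hs, hsL⟩ := hker
  refine ⟨s * t, S.mul_mem hs ht, fun x hx => ?_⟩
  have htx : t • x ∈ LinearMap.ker f := by
    rw [LinearMap.mem_ker, map_smul, htL (f x) (Submodule.mem_map_of_mem hx)]
  rw [mul_smul, hsL (t • x) ⟨L.smul_mem t hx, htx⟩]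

end IsUSTorsion

end Torsion

namespace USEssential

variable {R M N : Type*} [CommRing R] {S : Submonoid R} [AddCommGroup M] [Module R M]
  [AddCommGroup N] [Module R N]

theorem comap {K : Submodule R N} (hK : USEssential S K) (f : M →ₗ[R] N) :
    USEssential S (K.comap f) := by
  intro L (hL : IsUSTorsion S (K.comap f ⊓ L))
  rw [inf_comm] at hL
  have hmap : IsUSTorsion S (L.map f) := by
    apply hK
    rw [inf_comm, Submodule.map_inf_eq_map_inf_comap]
    exact hL.map f
  have hker : IsUSTorsion S (L ⊓ LinearMap.ker f) :=
    hL.mono (inf_le_inf_left L (LinearMap.ker_le_comap f))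
  exact hmap.of_map_of_inf_ker hker

theorem inf {K K' : Submodule R M} (hK : USEssential S K) (hK' : USEssential S K') :
    USEssential S (K ⊓ K') := by
  intro L hL
  rw [inf_assoc] at hL
  exact hK' L (hK (K' ⊓ L) hL)

end USEssential

/-- Theorem (prop6): `K₁ ⊕ K₂` is u-S-essential in `M₁ ⊕ M₂` iff `K₁` is
u-S-essential in `M₁` and `K₂` is u-S-essential in `M₂`. -/
theorem uSEssential_prod_iff {R : Type*} [CommRing R] [Nontrivial R] (S : Submonoid R)
    (hS0 : (0 : R) ∉ S) {M₁ M₂ : Type*} [AddCommGroup M₁] [Module R M₁]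
    [AddCommGroup M₂] [Module R M₂] (K₁ : Submodule R M₁) (K₂ : Submodule R M₂) :
    USEssential S (K₁.prod K₂) ↔ USEssential S K₁ ∧ USEssential S K₂ := by
  constructor
  · intro h
    have h₁ := h.comap (LinearMap.inl R M₁ M₂)
    have h₂ := h.comap (LinearMap.inr R M₁ M₂)
    rw [Submodule.prod_comap_inl] at h₁
    rw [Submodule.prod_comap_inr] at h₂
    exact ⟨h₁, h₂⟩
  · rintro ⟨h₁, h₂⟩
    rw [LinearMap.prod_eq_inf_comap]
    exact (h₁.comap (LinearMap.fst R M₁ M₂)).inf (h₂.comap (LinearMap.snd R M₁ M₂))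
end

section
/- Let R be a commutative ring, S a multiplicative subset of R, (M_α)_{α ∈ A} a family of R-modules, and K_α a submodule of M_α for each α ∈ A. If the S-torsion submodule tor_S(⊕_{α∈A} M_α) of the direct sum is u-S-torsion and K_α is u-S-essential in M_α for every α ∈ A, then ⊕_{α∈A} K_α is a u-S-essential submodule of ⊕_{α∈A} M_α. -/
open DirectSum

/-- The direct sum `⊕ K i` of a family of submodules `K i ≤ M i`, as a submodule of
the direct sum `⨁ i, M i`. -/
def directSumSubmodule {R : Type*} [CommRing R] {ι : Type*} {M : ι → Type*}
    [∀ i, AddCommGroup (M i)] [∀ i, Module R (M i)] (K : ∀ i, Submodule R (M i)) :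
    Submodule R (⨁ i, M i) where
  carrier := {x | ∀ i, x i ∈ K i}
  zero_mem' := fun i => by simp
  add_mem' := fun {a b} ha hb i => by
    rw [DirectSum.add_apply]; exact (K i).add_mem (ha i) (hb i)
  smul_mem' := fun r x hx i => by
    rw [DFinsupp.smul_apply]; exact (K i).smul_mem r (hx i)

section Torsion

open Submodule

variable {R M N : Type*} [CommSemiring R] {S : Submonoid R}
  [AddCommMonoid M] [Module R M] [AddCommMonoid N] [Module R N]

/-- A submodule is u-`S`-torsion if a single element of `S` annihilates it. -/
def USTorsion (S : Submonoid R) (L : Submodule R M) : Prop :=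
  ∃ s ∈ S, ∀ x ∈ L, s • x = 0

theorem USTorsion.mono {L L' : Submodule R M} (hL' : USTorsion S L') (hle : L ≤ L') :
    USTorsion S L :=
  let ⟨s, hs, hsL'⟩ := hL'
  ⟨s, hs, fun x hx => hsL' x (hle hx)⟩

theorem USTorsion.le_torsion' {L : Submodule R M} (hL : USTorsion S L) :
    L ≤ torsion' R M S :=
  let ⟨s, hs, hsL⟩ := hL
  fun x hx => ⟨⟨s, hs⟩, hsL x hx⟩

theorem uSTorsion_iff_le_torsion' (htor : USTorsion S (torsion' R M S)) {L : Submodule R M} :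
    USTorsion S L ↔ L ≤ torsion' R M S :=
  ⟨USTorsion.le_torsion', htor.mono⟩

theorem USTorsion.comap_of_injective {L : Submodule R N} (hL : USTorsion S L) {f : M →ₗ[R] N}
    (hf : Function.Injective f) : USTorsion S (L.comap f) := by
  obtain ⟨s, hs, hsL⟩ := hL
  refine ⟨s, hs, fun x hx => hf ?_⟩
  rw [map_smul, hsL (f x) hx, map_zero]

theorem torsion'_le_comap_torsion' (S : Submonoid R) (f : M →ₗ[R] N) :
    torsion' R M S ≤ (torsion' R N S).comap f := by
  rintro x ⟨s, hsx⟩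
  exact ⟨s, by rw [Submonoid.smul_def, ← map_smul, ← Submonoid.smul_def, hsx, map_zero]⟩

theorem mem_torsion'_of_smul_mem {x : M} (s : S) (hx : s • x ∈ torsion' R M S) :
    x ∈ torsion' R M S :=
  let ⟨t, htx⟩ := hx
  ⟨t * s, by rw [mul_smul, htx]⟩

/-- The non-uniform version of u-`S`-essentiality: a submodule is `S`-torsion as soon as its
intersection with `K` is. As annihilators may depend on the element, this can be checked on cyclic
submodules. -/
def SEssential (S : Submonoid R) (K : Submodule R M) : Prop :=
  ∀ L : Submodule R M, K ⊓ L ≤ torsion' R M S → L ≤ torsion' R M S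

theorem sEssential_top : SEssential S (⊤ : Submodule R M) :=
  fun L hL => by rwa [top_inf_eq] at hL

theorem SEssential.inf {K K' : Submodule R M} (hK : SEssential S K) (hK' : SEssential S K') :
    SEssential S (K ⊓ K') :=
  fun L hL => hK' L (hK (K' ⊓ L) (by rwa [← inf_assoc]))

theorem SEssential.finset_inf {ι : Type*} (F : Finset ι) {K : ι → Submodule R M}
    (hK : ∀ i ∈ F, SEssential S (K i)) : SEssential S (F.inf K) :=
  Finset.inf_induction sEssential_top (fun _ h _ h' => h.inf h') hK

theorem SEssential.comap {K : Submodule R N} (hK : SEssential S K) (f : M →ₗ[R] N) :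
    SEssential S (K.comap f) := by
  intro L hL x hx
  have hmap : L.map f ≤ torsion' R N S := by
    refine hK (L.map f) ?_
    rintro _ ⟨hyK, y, hyL, rfl⟩
    exact torsion'_le_comap_torsion' S f (hL ⟨hyK, hyL⟩)
  obtain ⟨s, hsx⟩ : f x ∈ torsion' R N S := hmap (mem_map_of_mem hx)
  have hsxK : s • x ∈ K.comap f := by
    have hfsx : f (s • x) = 0 := by rwa [Submonoid.smul_def, map_smul]
    rw [mem_comap, hfsx]
    exact K.zero_mem
  exact mem_torsion'_of_smul_mem s (hL ⟨hsxK, L.smul_mem (s : R) hx⟩)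

end Torsion

open Submodule in
theorem uSEssential_iff_sEssential {R M : Type*} [CommRing R] {S : Submonoid R}
    [AddCommGroup M] [Module R M] (htor : USTorsion S (torsion' R M S)) {K : Submodule R M} :
    USEssential S K ↔ SEssential S K :=
  forall_congr' fun _ =>
    imp_congr (uSTorsion_iff_le_torsion' htor) (uSTorsion_iff_le_torsion' htor)

section DirectSum

open Submodule

variable {R : Type*} [CommRing R] {S : Submonoid R} {ι : Type*} {M : ι → Type*}
  [∀ i, AddCommGroup (M i)] [∀ i, Module R (M i)]

theorem USTorsion.torsion'_of_directSum (htor : USTorsion S (torsion' R (⨁ i, M i) S)) (i : ι) :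
    USTorsion S (torsion' R (M i) S) := by
  classical
  have hinj : Function.Injective (lof R ι M i) := DirectSum.of_injective i
  exact (htor.comap_of_injective hinj).mono (torsion'_le_comap_torsion' S (lof R ι M i))

theorem smul_mem_directSumSubmodule {K : ∀ i, Submodule R (M i)} {x : ⨁ i, M i} {r : R}
    (hr : ∀ i, x i ≠ 0 → r • x i ∈ K i) : r • x ∈ directSumSubmodule K := by
  intro i
  rw [DirectSum.smul_apply]
  by_cases hi : x i = 0
  · rw [hi, smul_zero]
    exact (K i).zero_mem
  · exact hr i hi

theorem sEssential_directSumSubmodule {K : ∀ i, Submodule R (M i)} (hK : ∀ i, SEssential S (K i)) :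
    SEssential S (directSumSubmodule K) := by
  classical
  intro L hL x hx
  let F : Finset ι := DFinsupp.support x
  have hF : SEssential S (F.inf fun i => (K i).comap (component R ι M i)) :=
    SEssential.finset_inf F fun i _ => (hK i).comap (component R ι M i)
  refine hF (R ∙ x) ?_ (mem_span_singleton_self x)
  rintro _ ⟨hrxF, hrx⟩
  obtain ⟨r, rfl⟩ := mem_span_singleton.1 hrx
  have hrxK : r • x ∈ directSumSubmodule K :=
    smul_mem_directSumSubmodule fun i hi =>
      mem_finsetInf.1 hrxF i (DFinsupp.mem_support_iff.2 hi)
  exact hL ⟨hrxK, L.smul_mem r hx⟩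

end DirectSum

/-- Proposition: if `tor_S(⨁ i, M i)` is u-S-torsion and each `K i` is u-S-essential
in `M i`, then `⊕ K i` is u-S-essential in `⨁ i, M i`. -/
theorem uSEssential_directSum {R : Type*} [CommRing R] [Nontrivial R] (S : Submonoid R)
    (hS0 : (0 : R) ∉ S) {ι : Type*} {M : ι → Type*}
    [∀ i, AddCommGroup (M i)] [∀ i, Module R (M i)] (K : ∀ i, Submodule R (M i))
    (htor : ∃ s ∈ S, ∀ x : ⨁ i, M i, (∃ t ∈ S, t • x = 0) → s • x = 0)
    (hK : ∀ i, USEssential S (K i)) :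
    USEssential S (directSumSubmodule K) := by
  have htor' : USTorsion S (Submodule.torsion' R (⨁ i, M i) S) := by
    simpa [USTorsion] using htor
  rw [uSEssential_iff_sEssential htor']
  exact sEssential_directSumSubmodule fun i =>
    (uSEssential_iff_sEssential (htor'.torsion'_of_directSum i)).1 (hK i)
end

section
/- Let R be a commutative ring, S a multiplicative subset of R, and M an R-module. If f : M → E and f' : M → E' are both u-S-injective u-S-envelopes of M, then there is a u-S-isomorphism from E to E'. -/
/-!
If `g : E → E'` and `k : E' → E` extend `f'` and `f` up to factors from `S`, the envelope property
makes both `k ∘ g` and `g ∘ k` u-S-isomorphisms: the first forces `g` to be a u-S-monomorphism, the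
second a u-S-epimorphism. So every extension of `f'` along `f` up to a factor from `S` is a
u-S-isomorphism, and the preenvelope property provides one.
-/

universe u

/-- `f` is a u-S-monomorphism: its kernel is u-S-torsion. -/
def IsUSMono {R : Type*} [CommRing R] (S : Submonoid R) {M N : Type*}
    [AddCommGroup M] [Module R M] [AddCommGroup N] [Module R N] (f : M →ₗ[R] N) : Prop :=
  ∃ s ∈ S, ∀ x ∈ LinearMap.ker f, s • x = 0

/-- `f` is a u-S-epimorphism: its cokernel is u-S-torsion. -/
def IsUSEpi {R : Type*} [CommRing R] (S : Submonoid R) {M N : Type*}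
    [AddCommGroup M] [Module R M] [AddCommGroup N] [Module R N] (f : M →ₗ[R] N) : Prop :=
  ∃ s ∈ S, ∀ y : N, s • y ∈ LinearMap.range f

/-- `f` is a u-S-isomorphism: both a u-S-monomorphism and a u-S-epimorphism. -/
def IsUSIso {R : Type*} [CommRing R] (S : Submonoid R) {M N : Type*}
    [AddCommGroup M] [Module R M] [AddCommGroup N] [Module R N] (f : M →ₗ[R] N) : Prop :=
  IsUSMono S f ∧ IsUSEpi S f

/-- `E` is u-S-injective: for every u-S-monomorphism `f : A → B` there is `s ∈ S` such
that every `h : A → E` factors as `s • h = g ∘ f` for some `g : B → E`. -/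
def IsUSInjective {R : Type u} [CommRing R] (S : Submonoid R) (E : Type u)
    [AddCommGroup E] [Module R E] : Prop :=
  ∀ (A B : Type u) [AddCommGroup A] [Module R A] [AddCommGroup B] [Module R B]
    (f : A →ₗ[R] B), IsUSMono S f →
      ∃ s ∈ S, ∀ h : A →ₗ[R] E, ∃ g : B →ₗ[R] E, s • h = g ∘ₗ f

/-- `f : M → E` with `E` u-S-injective is a u-S-injective u-S-preenvelope of `M`:
for every u-S-injective `E'` there is `s ∈ S` such that every `h : M → E'` factors
as `s • h = g ∘ f` for some `g : E → E'`. -/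
def USInjPreenvelope {R : Type u} [CommRing R] (S : Submonoid R) {M E : Type u}
    [AddCommGroup M] [Module R M] [AddCommGroup E] [Module R E] (f : M →ₗ[R] E) : Prop :=
  IsUSInjective S E ∧
    ∀ (E' : Type u) [AddCommGroup E'] [Module R E'], IsUSInjective S E' →
      ∃ s ∈ S, ∀ h : M →ₗ[R] E', ∃ g : E →ₗ[R] E', s • h = g ∘ₗ f

/-- A u-S-injective u-S-preenvelope `f : M → E` is a u-S-injective u-S-envelope if every
endomorphism `α` of `E` with `s • f = α ∘ f` for some `s ∈ S` is a u-S-isomorphism. -/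
def USInjEnvelope {R : Type u} [CommRing R] (S : Submonoid R) {M E : Type u}
    [AddCommGroup M] [Module R M] [AddCommGroup E] [Module R E] (f : M →ₗ[R] E) : Prop :=
  USInjPreenvelope S f ∧
    ∀ α : E →ₗ[R] E, (∃ s ∈ S, s • f = α ∘ₗ f) → IsUSIso S α

section Composition

variable {R : Type*} [CommRing R] {S : Submonoid R} {M N P : Type*}
  [AddCommGroup M] [Module R M] [AddCommGroup N] [Module R N] [AddCommGroup P] [Module R P]
  {f : M →ₗ[R] N} {g : N →ₗ[R] P}

theorem IsUSMono.of_comp (h : IsUSMono S (g ∘ₗ f)) : IsUSMono S f := by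
  obtain ⟨s, hs, hs_ker⟩ := h
  exact ⟨s, hs, fun x hx ↦ hs_ker x (LinearMap.ker_le_ker_comp f g hx)⟩

theorem IsUSEpi.of_comp (h : IsUSEpi S (g ∘ₗ f)) : IsUSEpi S g := by
  obtain ⟨s, hs, hs_range⟩ := h
  exact ⟨s, hs, fun y ↦ LinearMap.range_comp_le_range f g (hs_range y)⟩

end Composition

section Envelope

variable {R : Type u} [CommRing R] {S : Submonoid R} {M E : Type u}
  [AddCommGroup M] [Module R M] [AddCommGroup E] [Module R E] {f : M →ₗ[R] E}

theorem USInjPreenvelope.exists_smul_eq_comp (hf : USInjPreenvelope S f) {E' : Type u}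
    [AddCommGroup E'] [Module R E'] (hE' : IsUSInjective S E') (h : M →ₗ[R] E') :
    ∃ s ∈ S, ∃ g : E →ₗ[R] E', s • h = g ∘ₗ f := by
  obtain ⟨s, hs, hs_factor⟩ := hf.2 E' hE'
  exact ⟨s, hs, hs_factor h⟩

theorem USInjEnvelope.isUSIso_comp (hf : USInjEnvelope S f) {N : Type*} [AddCommGroup N]
    [Module R N] {f' : M →ₗ[R] N} {g : E →ₗ[R] N} {k : N →ₗ[R] E} {s t : R} (hs : s ∈ S)
    (ht : t ∈ S) (hg : s • f' = g ∘ₗ f) (hk : t • f = k ∘ₗ f') : IsUSIso S (k ∘ₗ g) := by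
  refine hf.2 (k ∘ₗ g) ⟨s * t, S.mul_mem hs ht, ?_⟩
  calc
    (s * t) • f = s • (k ∘ₗ f') := by rw [mul_smul, hk]
    _ = k ∘ₗ (g ∘ₗ f) := by rw [← LinearMap.comp_smul, hg]
    _ = (k ∘ₗ g) ∘ₗ f := (LinearMap.comp_assoc f g k).symm

theorem USInjEnvelope.isUSIso_of_smul_eq_comp (hf : USInjEnvelope S f) {E' : Type u}
    [AddCommGroup E'] [Module R E'] {f' : M →ₗ[R] E'} (hf' : USInjEnvelope S f')
    {g : E →ₗ[R] E'} {s : R} (hs : s ∈ S) (hg : s • f' = g ∘ₗ f) : IsUSIso S g := by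
  obtain ⟨t, ht, k, hk⟩ := hf'.1.exists_smul_eq_comp hf.1.1 f
  have hkg : IsUSIso S (k ∘ₗ g) := hf.isUSIso_comp hs ht hg hk
  have hgk : IsUSIso S (g ∘ₗ k) := hf'.isUSIso_comp ht hs hk hg
  exact ⟨hkg.1.of_comp, hgk.2.of_comp⟩

end Envelope

/-- Proposition (prop9): any two u-S-injective u-S-envelopes of `M` are u-S-isomorphic. -/
theorem uSInjEnvelope_unique {R : Type u} [CommRing R] [Nontrivial R]
    (S : Submonoid R) (hS0 : (0 : R) ∉ S) {M E E' : Type u} [AddCommGroup M] [Module R M]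
    [AddCommGroup E] [Module R E] [AddCommGroup E'] [Module R E']
    (f : M →ₗ[R] E) (f' : M →ₗ[R] E')
    (hf : USInjEnvelope S f) (hf' : USInjEnvelope S f') :
    ∃ g : E →ₗ[R] E', IsUSIso S g := by
  obtain ⟨s, hs, g, hg⟩ := hf.1.exists_smul_eq_comp hf'.1.1 f'
  exact ⟨g, hf.isUSIso_of_smul_eq_comp hf' hs hg⟩
end

section
/- Let R be a commutative ring that is u-S-Noetherian, S a regular multiplicative subset of R (i.e., every element of S is a nonzerodivisor of R), and (M_α)_{α ∈ A} a family of prime R-modules. For each α ∈ A let E_α be an injective R-module containing M_α as an essential submodule (an injective envelope of M_α), and set E = ⊕_{α∈A} E_α. If tor_S(E) is u-S-torsion, then the direct sum of the inclusions ⊕_{α∈A} M_α → ⊕_{α∈A} E_α is a u-S-injective u-S-envelope of ⊕_{α∈A} M_α; in particular, E_{u-S}(⊕_{α∈A} M_α) is u-S-isomorphic to ⊕_{α∈A} E_α. -/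
/-!
Let `s ∈ S` annihilate the `S`-torsion of `E = ⨁ a, E a`. Then `sE` is `S`-torsion-free, and, the
`E a` being injective, it is contained in `tE` for every `t ∈ S`: an element `s • x` is killed by
the annihilator of `t`. Hence `s` acts bijectively on `sE`, and the failure of `E` to be injective
is confined to torsion, which is invisible up to multiplication by `s`.

Over a u-S-Noetherian ring `sE` is injective in the ordinary sense. By Baer's criterion one has to
extend a map `h : I → sE` from an ideal `I`. If `J ≤ I` is finitely generated and `t • I ≤ J`, then
the image of `J` lies in a finite subsum, hence so does that of `I`, by torsion-freeness; now extend
the finitely many coordinates separately. Consequently `E` is u-S-injective.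

An endomorphism `α` of `E` that acts as some `t ∈ S` on the essential submodule `⨁ a, M a` restricts
to an endomorphism of `sE`, which is injective by essentiality. It has a left inverse because `sE`
is injective, and this left inverse is injective by essentiality again. So `α` is bijective on `sE`,
which makes it a u-S-isomorphism of `E`.
-/

open DirectSum

universe u

/-- `K` is an essential submodule of `M`. -/
def EssentialSub {R : Type*} [CommRing R] {M : Type*} [AddCommGroup M] [Module R M]
    (K : Submodule R M) : Prop :=
  ∀ L : Submodule R M, K ⊓ L = ⊥ → L = ⊥

/-- `M` is a prime `R`-module: every nonzero submodule has the same annihilator as `M`. -/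
def IsPrimeModule (R : Type*) [CommRing R] (M : Type*) [AddCommGroup M] [Module R M] : Prop :=
  ∀ N : Submodule R M, N ≠ ⊥ → N.annihilator = (⊤ : Submodule R M).annihilator

/-- `R` is u-S-Noetherian: there is `s ∈ S` such that every ideal `I` of `R` admits a
finitely generated subideal `J ⊆ I` with `s • I ⊆ J`. -/
def USNoetherian (R : Type*) [CommRing R] (S : Submonoid R) : Prop :=
  ∃ s ∈ S, ∀ I : Ideal R, ∃ J : Ideal R, J ≤ I ∧ J.FG ∧ ∀ x ∈ I, s • x ∈ J

section InjectiveModules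

universe v

variable {R : Type u} {Q : Type v} [AddCommGroup Q]

theorem exists_comp_eq_of_ker_le_ker [Ring R] [Module R Q] [Small.{v} R] [Module.Injective R Q]
    {A B : Type*} [AddCommGroup A] [Module R A] [AddCommGroup B] [Module R B] {f : A →ₗ[R] B}
    {h : A →ₗ[R] Q} (hle : LinearMap.ker f ≤ LinearMap.ker h) : ∃ g : B →ₗ[R] Q, g ∘ₗ f = h := by
  obtain ⟨g, hg⟩ := Module.Injective.extension_property R _ _ _ ((LinearMap.ker f).liftQ f le_rfl)
    (LinearMap.ker_eq_bot.1 (Submodule.ker_liftQ_eq_bot _ _ _ le_rfl))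
    ((LinearMap.ker f).liftQ h hle)
  refine ⟨g, LinearMap.ext fun x => ?_⟩
  simpa using LinearMap.congr_fun hg (Submodule.Quotient.mk x)

theorem exists_smul_eq_of_forall_mul_eq_zero [CommRing R] [Module R Q] [Small.{v} R]
    [Module.Injective R Q] {s : R} {x : Q} (hx : ∀ r : R, r * s = 0 → r • x = 0) :
    ∃ y : Q, s • y = x := by
  obtain ⟨g, hg⟩ := exists_comp_eq_of_ker_le_ker (f := LinearMap.toSpanSingleton R R s)
    (h := LinearMap.toSpanSingleton R Q x) hx
  refine ⟨g 1, ?_⟩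
  rw [← map_smul]
  simpa using LinearMap.congr_fun hg 1

end InjectiveModules

section UniformInjectivity

variable {R : Type u} [CommRing R] {S : Submonoid R}

theorem IsUSMono.of_injective {M N : Type*} [AddCommGroup M] [Module R M] [AddCommGroup N]
    [Module R N] {f : M →ₗ[R] N} (hf : Function.Injective f) : IsUSMono S f :=
  ⟨1, S.one_mem, fun x hx => by
    rw [one_smul, hf ((LinearMap.mem_ker.1 hx).trans (map_zero f).symm)]⟩

variable {E : Type u} [AddCommGroup E] [Module R E]

theorem IsUSInjective.of_injective [Module.Injective R E] : IsUSInjective S E := by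
  intro A B _ _ _ _ f ⟨s, hs, hker⟩
  refine ⟨s, hs, fun h => ?_⟩
  have hle : LinearMap.ker f ≤ LinearMap.ker (s • h) := fun x hx => by
    rw [LinearMap.mem_ker, LinearMap.smul_apply, ← map_smul, hker x hx, map_zero]
  obtain ⟨g, hg⟩ := exists_comp_eq_of_ker_le_ker hle
  exact ⟨g, hg.symm⟩

theorem IsUSInjective.of_comp_eq_smul {Q : Type u} [AddCommGroup Q] [Module R Q]
    (hQ : IsUSInjective S Q) {i : Q →ₗ[R] E} {p : E →ₗ[R] Q} {s : R} (hs : s ∈ S)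
    (hip : i ∘ₗ p = s • LinearMap.id) : IsUSInjective S E := by
  intro A B _ _ _ _ f hf
  obtain ⟨t, ht, hext⟩ := hQ A B f hf
  refine ⟨t * s, S.mul_mem ht hs, fun h => ?_⟩
  obtain ⟨g, hg⟩ := hext (p ∘ₗ h)
  refine ⟨i ∘ₗ g, ?_⟩
  calc (t * s) • h = t • ((i ∘ₗ p) ∘ₗ h) := by rw [hip, mul_smul]; rfl
    _ = i ∘ₗ (t • (p ∘ₗ h)) := by rw [LinearMap.comp_smul, LinearMap.comp_assoc]
    _ = (i ∘ₗ g) ∘ₗ f := by rw [hg, LinearMap.comp_assoc]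

theorem IsUSInjective.uSInjPreenvelope (hE : IsUSInjective S E) {M : Type u} [AddCommGroup M]
    [Module R M] {f : M →ₗ[R] E} (hf : IsUSMono S f) : USInjPreenvelope S f :=
  ⟨hE, fun _ _ _ hE' => hE' M E f hf⟩

end UniformInjectivity

namespace EssentialSub

universe v

variable {R : Type*} [CommRing R] {E : Type v} [AddCommGroup E] [Module R E] {K : Submodule R E}

theorem iff_exists_smul_mem :
    EssentialSub K ↔ ∀ x : E, x ≠ 0 → ∃ r : R, r • x ≠ 0 ∧ r • x ∈ K := by
  refine ⟨fun hK x hx => ?_, fun hK L hL => ?_⟩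
  · have hmeet : K ⊓ Submodule.span R {x} ≠ ⊥ := fun h =>
      hx (Submodule.span_singleton_eq_bot.1 (hK _ h))
    obtain ⟨y, ⟨hyK, hyx⟩, hy⟩ := Submodule.exists_mem_ne_zero_of_ne_bot hmeet
    obtain ⟨r, rfl⟩ := Submodule.mem_span_singleton.1 hyx
    exact ⟨r, hy, hyK⟩
  · refine (Submodule.eq_bot_iff L).2 fun x hxL => ?_
    by_contra hx
    obtain ⟨r, hr, hrK⟩ := hK x hx
    exact hr ((Submodule.eq_bot_iff _).1 hL _ ⟨hrK, L.smul_mem r hxL⟩)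

theorem comap (hK : EssentialSub K) {Q : Type*} [AddCommGroup Q] [Module R Q] {f : Q →ₗ[R] E}
    (hf : Function.Injective f) : EssentialSub (K.comap f) := by
  intro L hL
  apply Submodule.map_injective_of_injective hf
  rw [Submodule.map_bot]
  apply hK
  rw [inf_comm, Submodule.map_inf_eq_map_inf_comap, inf_comm, hL, Submodule.map_bot]

theorem injective_of_forall_mem (hK : EssentialSub K) {N : Type*} [AddCommGroup N] [Module R N]
    {f : E →ₗ[R] N} (hf : ∀ x ∈ K, f x = 0 → x = 0) : Function.Injective f :=
  LinearMap.ker_eq_bot.1 <| hK _ <| (Submodule.eq_bot_iff _).2 fun x hx => hf x hx.1 hx.2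

theorem bijective_of_eq_smul (hK : EssentialSub K) [Small.{v} R] [Module.Injective R E] {t : R}
    (ht : ∀ x : E, t • x = 0 → x = 0) {β : E →ₗ[R] E} (hβ : ∀ x ∈ K, β x = t • x) :
    Function.Bijective β := by
  have hinj : Function.Injective β := hK.injective_of_forall_mem fun x hx hx0 =>
    ht x (by rw [← hβ x hx, hx0])
  obtain ⟨g, hg⟩ := Module.Injective.extension_property R _ _ _ β hinj LinearMap.id
  have hgβ : ∀ x, g (β x) = x := LinearMap.congr_fun hg
  have hginj : Function.Injective g := hK.injective_of_forall_mem fun x hx hx0 => by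
    rw [← hgβ x, hβ x hx, map_smul, hx0, smul_zero]
  exact ⟨hinj, fun y => ⟨g y, hginj (hgβ (g y))⟩⟩

end EssentialSub

section EssentialDirectSum

variable {R : Type*} [CommRing R] {ι : Type*} {E : ι → Type*} [∀ a, AddCommGroup (E a)]
  [∀ a, Module R (E a)] {M : ∀ a, Submodule R (E a)}

theorem exists_smul_ne_zero_forall_mem_finset (hess : ∀ a, EssentialSub (M a)) {x : ⨁ a, E a}
    (hx : x ≠ 0) (F : Finset ι) : ∃ r : R, r • x ≠ 0 ∧ ∀ a ∈ F, r • x a ∈ M a := by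
  classical
  induction F using Finset.induction_on with
  | empty => exact ⟨1, by rwa [one_smul], by simp⟩
  | insert b F _ ih =>
    obtain ⟨r, hr, hrF⟩ := ih
    by_cases hb : r • x b = 0
    · refine ⟨r, hr, Finset.forall_mem_insert _ _ _ |>.2 ⟨?_, hrF⟩⟩
      exact hb ▸ zero_mem _
    · obtain ⟨c, hc, hcM⟩ := EssentialSub.iff_exists_smul_mem.1 (hess b) _ hb
      rw [← mul_smul] at hc hcM
      refine ⟨c * r, fun h => hc ?_, Finset.forall_mem_insert _ _ _ |>.2 ⟨hcM, fun a ha => ?_⟩⟩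
      · exact DFunLike.congr_fun h b
      · rw [mul_smul]
        exact (M a).smul_mem c (hrF a ha)

theorem essentialSub_range_mapRange_subtype (hess : ∀ a, EssentialSub (M a)) :
    EssentialSub (LinearMap.range (DFinsupp.mapRange.linearMap (fun a => (M a).subtype) :
      (⨁ a, M a) →ₗ[R] ⨁ a, E a)) := by
  classical
  refine EssentialSub.iff_exists_smul_mem.2 fun x hx => ?_
  obtain ⟨r, hr, hrM⟩ := exists_smul_ne_zero_forall_mem_finset hess hx (DFinsupp.support x)
  refine ⟨r, hr, ?_⟩
  rw [DFinsupp.range_mapRangeLinearMap]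
  intro a _
  change r • x a ∈ LinearMap.range (M a).subtype
  rw [Submodule.range_subtype]
  by_cases ha : a ∈ DFinsupp.support x
  · exact hrM a ha
  · rw [DFinsupp.notMem_support_iff.1 ha, smul_zero]
    exact zero_mem _

end EssentialDirectSum

open scoped Pointwise

/-- `s` annihilates the `S`-torsion of `E`. For `s ∈ S` this says that `s` witnesses that `tor_S(E)`
is u-S-torsion. -/
def AnnihilatesTorsion {R : Type*} [CommRing R] (S : Submonoid R) (s : R) (E : Type*)
    [AddCommGroup E] [Module R E] : Prop :=
  ∀ x : E, (∃ t ∈ S, t • x = 0) → s • x = 0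

namespace AnnihilatesTorsion

universe v

variable {R : Type u} [CommRing R] {S : Submonoid R} {s t : R}

theorem of_injective {E F : Type*} [AddCommGroup E] [Module R E] [AddCommGroup F] [Module R F]
    (hF : AnnihilatesTorsion S s F) {f : E →ₗ[R] F} (hf : Function.Injective f) :
    AnnihilatesTorsion S s E := by
  rintro x ⟨t, ht, hx⟩
  apply hf
  rw [map_smul, map_zero]
  exact hF (f x) ⟨t, ht, by rw [← map_smul, hx, map_zero]⟩

theorem eq_zero_of_smul_eq_zero {E : Type*} [AddCommGroup E] [Module R E]
    (h : AnnihilatesTorsion S s E) (hs : s ∈ S) {x : E} (hx : x ∈ s • (⊤ : Submodule R E))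
    (ht : t ∈ S) (htx : t • x = 0) : x = 0 := by
  obtain ⟨y, -, rfl⟩ := (Submodule.mem_smul_pointwise_iff_exists _ _ _).1 hx
  exact h y ⟨t * s, S.mul_mem ht hs, by rw [mul_smul, htx]⟩

theorem of_directSum {ι : Type*} {E : ι → Type*} [∀ a, AddCommGroup (E a)]
    [∀ a, Module R (E a)] (h : AnnihilatesTorsion S s (⨁ a, E a)) (a : ι) :
    AnnihilatesTorsion S s (E a) := by
  classical
  exact h.of_injective (f := DirectSum.lof R ι E a) (DirectSum.of_injective a)

theorem exists_smul_eq_smul {E : Type v} [Small.{v} R] [AddCommGroup E] [Module R E]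
    [Module.Injective R E] (h : AnnihilatesTorsion S s E) (ht : t ∈ S) (x : E) :
    ∃ y : E, t • y = s • x := by
  refine exists_smul_eq_of_forall_mul_eq_zero fun r hr => ?_
  rw [smul_comm]
  exact h (r • x) ⟨t, ht, by rw [← mul_smul, mul_comm, hr, zero_smul]⟩

end AnnihilatesTorsion

section FiniteSupport

universe v

theorem exists_finset_forall_apply_eq_zero_of_fg {R : Type*} [Semiring R] {ι : Type*}
    {E : ι → Type*} [∀ a, AddCommMonoid (E a)] [∀ a, Module R (E a)]
    {N : Submodule R (⨁ a, E a)} (hN : N.FG) : ∃ F : Finset ι, ∀ x ∈ N, ∀ a ∉ F, x a = 0 := by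
  classical
  induction N, hN using Submodule.fg_induction with
  | singleton x =>
    refine ⟨DFinsupp.support x, fun y hy a ha => ?_⟩
    obtain ⟨r, rfl⟩ := Submodule.mem_span_singleton.1 hy
    rw [DirectSum.smul_apply, DFinsupp.notMem_support_iff.1 ha, smul_zero]
  | sup N₁ N₂ _ _ ih₁ ih₂ =>
    obtain ⟨F₁, hF₁⟩ := ih₁
    obtain ⟨F₂, hF₂⟩ := ih₂
    refine ⟨F₁ ∪ F₂, fun x hx a ha => ?_⟩
    obtain ⟨y, hy, z, hz, rfl⟩ := Submodule.mem_sup.1 hx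
    rw [Finset.notMem_union] at ha
    rw [DirectSum.add_apply, hF₁ y hy a ha.1, hF₂ z hz a ha.2, add_zero]

variable {R : Type u} [CommRing R] {S : Submonoid R} {ι : Type*}

theorem USNoetherian.exists_finset_forall_apply_eq_zero (hNoeth : USNoetherian R S)
    {E : ι → Type*} [∀ a, AddCommGroup (E a)] [∀ a, Module R (E a)] {I : Ideal R}
    {h : I →ₗ[R] ⨁ a, E a} (htf : ∀ t ∈ S, ∀ x a, t • h x a = 0 → h x a = 0) :
    ∃ F : Finset ι, ∀ x, ∀ a ∉ F, h x a = 0 := by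
  obtain ⟨t, ht, hsub⟩ := hNoeth
  obtain ⟨J, hJI, hJ, htJ⟩ := hsub I
  have : Module.Finite R J := Module.Finite.iff_fg.2 hJ
  obtain ⟨F, hF⟩ := exists_finset_forall_apply_eq_zero_of_fg
    (Module.Finite.iff_fg.1 (Module.Finite.range (h ∘ₗ Submodule.inclusion hJI)))
  refine ⟨F, fun x a ha => htf t ht x a ?_⟩
  rw [← DirectSum.smul_apply, ← map_smul]
  exact hF _ ⟨⟨t • x, htJ x x.2⟩, rfl⟩ a ha

theorem USNoetherian.exists_forall_smul_eq (hNoeth : USNoetherian R S) [Small.{v} R]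
    {E : ι → Type v} [∀ a, AddCommGroup (E a)] [∀ a, Module R (E a)]
    [∀ a, Module.Injective R (E a)] {I : Ideal R}
    {h : I →ₗ[R] ⨁ a, E a} (htf : ∀ t ∈ S, ∀ x a, t • h x a = 0 → h x a = 0) :
    ∃ y : ⨁ a, E a, ∀ x : I, (x : R) • y = h x := by
  classical
  obtain ⟨F, hF⟩ := hNoeth.exists_finset_forall_apply_eq_zero htf
  have hbaer : ∀ a, Module.Baer R (E a) := fun _ => Module.Baer.of_injective inferInstance
  choose g hg using fun a => hbaer a I (DirectSum.component R ι E a ∘ₗ h)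
  refine ⟨DirectSum.mk E F fun a => g a 1, fun x => DFinsupp.ext fun a => ?_⟩
  rw [DirectSum.smul_apply]
  by_cases ha : a ∈ F
  · rw [DirectSum.mk_apply_of_mem ha, ← map_smul, smul_eq_mul, mul_one]
    exact hg a x x.2
  · rw [DirectSum.mk_apply_of_notMem ha, smul_zero, hF x a ha]

end FiniteSupport

section DirectSumOfInjectives

universe v

variable {R : Type u} [CommRing R] [Small.{v} R] {S : Submonoid R} {s : R} {ι : Type*}
  {E : ι → Type v} [∀ a, AddCommGroup (E a)] [∀ a, Module R (E a)] [∀ a, Module.Injective R (E a)]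

theorem AnnihilatesTorsion.exists_smul_eq_smul_directSum
    (h : AnnihilatesTorsion S s (⨁ a, E a)) {t : R} (ht : t ∈ S) (x : ⨁ a, E a) :
    ∃ y : ⨁ a, E a, t • y = s • x := by
  classical
  induction x using DirectSum.induction_on with
  | zero => exact ⟨0, by rw [smul_zero, smul_zero]⟩
  | of a x =>
    obtain ⟨y, hy⟩ := (h.of_directSum a).exists_smul_eq_smul ht x
    exact ⟨of E a y, by rw [← of_smul, ← of_smul, hy]⟩
  | add x₁ x₂ ih₁ ih₂ =>
    obtain ⟨y₁, hy₁⟩ := ih₁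
    obtain ⟨y₂, hy₂⟩ := ih₂
    exact ⟨y₁ + y₂, by rw [smul_add, smul_add, hy₁, hy₂]⟩

theorem USNoetherian.injective_smul_top_directSum (hNoeth : USNoetherian R S) (hs : s ∈ S)
    (htor : AnnihilatesTorsion S s (⨁ a, E a)) :
    Module.Injective R ↥(s • (⊤ : Submodule R (⨁ a, E a))) := by
  refine Module.Baer.injective fun I h => ?_
  have htf : ∀ t ∈ S, ∀ x a, t • (h x : ⨁ a, E a) a = 0 → (h x : ⨁ a, E a) a = 0 := by
    intro t ht x a hx
    obtain ⟨z, -, hz⟩ := (Submodule.mem_smul_pointwise_iff_exists _ _ _).1 (h x).2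
    refine (htor.of_directSum a).eq_zero_of_smul_eq_zero hs ?_ ht hx
    rw [← hz, DirectSum.smul_apply]
    exact Submodule.smul_mem_pointwise_smul _ _ _ trivial
  obtain ⟨y, hy⟩ := hNoeth.exists_forall_smul_eq
    (h := (s • (⊤ : Submodule R (⨁ a, E a))).subtype ∘ₗ h) htf
  -- `y` need not lie in `sE`; replace it by the element of `sE` with the same multiple by `s`
  obtain ⟨z, hz⟩ := htor.exists_smul_eq_smul_directSum (S.mul_mem hs hs) y
  have hmem : s • z ∈ s • (⊤ : Submodule R (⨁ a, E a)) :=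
    Submodule.smul_mem_pointwise_smul _ _ _ trivial
  refine ⟨LinearMap.toSpanSingleton R _ ⟨s • z, hmem⟩, fun x hx => ?_⟩
  rw [LinearMap.toSpanSingleton_apply, ← sub_eq_zero]
  refine Subtype.ext (htor.eq_zero_of_smul_eq_zero hs (Subtype.property _) hs ?_)
  calc s • (x • s • z - (h ⟨x, hx⟩ : ⨁ a, E a))
      = x • ((s * s) • z) - s • (h ⟨x, hx⟩ : ⨁ a, E a) := by
        rw [smul_sub, smul_comm s x, mul_smul]
    _ = s • (x • y - h ⟨x, hx⟩) := by rw [hz, smul_comm x s, smul_sub]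
    _ = 0 := by rw [hy ⟨x, hx⟩]; exact smul_eq_zero_of_right s (sub_self _)

end DirectSumOfInjectives

section Envelope

variable {R : Type u} [CommRing R] {S : Submonoid R} {s : R} {E : Type u} [AddCommGroup E]
  [Module R E] [Module.Injective R ↥(s • (⊤ : Submodule R E))]

theorem isUSInjective_of_injective_smul_top (hs : s ∈ S) : IsUSInjective S E :=
  IsUSInjective.of_injective.of_comp_eq_smul hs (i := (s • (⊤ : Submodule R E)).subtype)
    (p := (LinearMap.lsmul R E s).codRestrict _ fun _ =>
      Submodule.smul_mem_pointwise_smul _ _ _ trivial) rfl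

theorem AnnihilatesTorsion.isUSIso_of_eq_smul (htor : AnnihilatesTorsion S s E) (hs : s ∈ S)
    {K : Submodule R E} (hK : EssentialSub K) {t : R} (ht : t ∈ S) {α : E →ₗ[R] E}
    (hα : ∀ x ∈ K, α x = t • x) : IsUSIso S α := by
  have hmem : ∀ x : E, s • x ∈ s • (⊤ : Submodule R E) := fun _ =>
    Submodule.smul_mem_pointwise_smul _ _ _ trivial
  have hmap : ∀ x ∈ s • (⊤ : Submodule R E), α x ∈ s • (⊤ : Submodule R E) := by
    intro x hx
    obtain ⟨y, -, rfl⟩ := (Submodule.mem_smul_pointwise_iff_exists _ _ _).1 hx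
    rw [map_smul]
    exact hmem (α y)
  obtain ⟨hinj, hsurj⟩ : Function.Bijective (α.restrict hmap) :=
    (hK.comap (Submodule.injective_subtype _)).bijective_of_eq_smul (t := t)
      (fun x hx => Subtype.ext <|
        htor.eq_zero_of_smul_eq_zero hs x.2 ht (congrArg Subtype.val hx))
      fun x hx => Subtype.ext (hα x hx)
  refine ⟨⟨s, hs, fun x hx => ?_⟩, ⟨s, hs, fun y => ?_⟩⟩
  · have hker : α.restrict hmap ⟨s • x, hmem x⟩ = 0 := Subtype.ext <| by
      change α (s • x) = 0
      rw [map_smul, LinearMap.mem_ker.1 hx, smul_zero]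
    exact congrArg Subtype.val (hinj (hker.trans (map_zero _).symm))
  · obtain ⟨x, hx⟩ := hsurj ⟨s • y, hmem y⟩
    exact ⟨x, congrArg Subtype.val hx⟩

theorem AnnihilatesTorsion.uSInjEnvelope (htor : AnnihilatesTorsion S s E) (hs : s ∈ S)
    {M : Type u} [AddCommGroup M] [Module R M] {f : M →ₗ[R] E} (hf : Function.Injective f)
    (hess : EssentialSub (LinearMap.range f)) : USInjEnvelope S f := by
  refine ⟨(isUSInjective_of_injective_smul_top hs).uSInjPreenvelope (.of_injective hf), ?_⟩
  rintro α ⟨t, ht, hα⟩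
  refine htor.isUSIso_of_eq_smul hs hess ht ?_
  rintro _ ⟨m, rfl⟩
  exact (LinearMap.congr_fun hα m).symm

end Envelope

theorem uSInjEnvelope_directSum_of_prime_general {R : Type u} [CommRing R] {S : Submonoid R}
    (hNoeth : USNoetherian R S) {ι : Type u} {E : ι → Type u}
    [∀ a, AddCommGroup (E a)] [∀ a, Module R (E a)] (M : ∀ a, Submodule R (E a))
    (hinj : ∀ a, Module.Injective R (E a)) (hess : ∀ a, EssentialSub (M a))
    (htor : ∃ s ∈ S, ∀ x : ⨁ a, E a, (∃ t ∈ S, t • x = 0) → s • x = 0) :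
    USInjEnvelope S (DFinsupp.mapRange.linearMap (fun a => (M a).subtype) :
      (⨁ a, M a) →ₗ[R] ⨁ a, E a) := by
  obtain ⟨s, hs, htor⟩ : ∃ s ∈ S, AnnihilatesTorsion S s (⨁ a, E a) := htor
  have hinj_smul := hNoeth.injective_smul_top_directSum hs htor
  have hincl : Function.Injective (DirectSum.lmap fun a => (M a).subtype) :=
    (DirectSum.lmap_injective _).2 fun a => (M a).injective_subtype
  exact htor.uSInjEnvelope hs hincl (essentialSub_range_mapRange_subtype hess)

/-- Theorem (thmN): let `R` be u-S-Noetherian, `S` a regular multiplicative subset, and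
`(M a)` a family of prime modules with injective envelopes `M a ≤ E a` (`E a` injective
and `M a` essential in `E a`).  If `tor_S(⊕ₐ E a)` is u-S-torsion, then the direct sum
of the inclusions `⊕ₐ M a → ⊕ₐ E a` is a u-S-injective u-S-envelope of `⊕ₐ M a`
(hence `E_{u-S}(⊕ₐ M a)` is u-S-isomorphic to `⊕ₐ E a`). -/
theorem uSInjEnvelope_directSum_of_prime {R : Type u} [CommRing R] [Nontrivial R]
    (S : Submonoid R) (hS0 : (0 : R) ∉ S) (hreg : S ≤ nonZeroDivisors R)
    (hNoeth : USNoetherian R S) {ι : Type u} {E : ι → Type u}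
    [∀ a, AddCommGroup (E a)] [∀ a, Module R (E a)]
    (M : ∀ a, Submodule R (E a))
    (hprime : ∀ a, IsPrimeModule R (M a))
    (hinj : ∀ a, Module.Injective R (E a))
    (hess : ∀ a, EssentialSub (M a))
    (htor : ∃ s ∈ S, ∀ x : (⨁ (a : ι), E a), (∃ t ∈ S, t • x = 0) → s • x = 0) :
    USInjEnvelope S
      (DFinsupp.mapRange.linearMap (fun a => (M a).subtype) :
        (⨁ (a : ι), ↥(M a)) →ₗ[R] (⨁ (a : ι), E a)) :=
  uSInjEnvelope_directSum_of_prime_general hNoeth M hinj hess htor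
end
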